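/- Let 𝒦 be an abelian category and let 𝒮 be a self-generating class of objects of 𝒦 that is closed under kernels of epimorphisms. Then 𝒮^{⊥₁} = 𝒮^{⊥≥1}; that is, for an object X ∈ 𝒦, if Ext^1_𝒦(S,X)=0 for all S ∈ 𝒮, then Ext^n_𝒦(S,X)=0 for all S ∈ 𝒮 and all n ≥ 1. -/

import Mathlib

/-!
STATEMENT 8: Let 𝒦 be an abelian category and 𝒮 a self-generating class of
objects closed under kernels of epimorphisms. Then 𝒮^{⊥₁} = 𝒮^{⊥≥1}.
-/

open CategoryTheory Limits

universe w v u

namespace Stmt8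

open HomologicalComplex in
/-- A map in the derived category from an object placed in degree `0` to one placed in
degree `m ≠ 0` is killed by pulling back along some epimorphism. -/
lemma exists_epi_Q_map_comp_eq_zero {C : Type u} [Category.{v} C] [Abelian C]
    [HasDerivedCategory.{w} C] (A Y : C) (m : ℤ) (hm : m ≠ 0)
    (g : DerivedCategory.Q.obj ((single C (ComplexShape.up ℤ) 0).obj A) ⟶
      DerivedCategory.Q.obj ((single C (ComplexShape.up ℤ) m).obj Y)) :
    ∃ (K : C) (p : K ⟶ A), Epi p ∧
      DerivedCategory.Q.map ((single C (ComplexShape.up ℤ) 0).map p) ≫ g = 0 := by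
  obtain ⟨X', s, hs, f, rfl⟩ := DerivedCategory.right_fac g
  have hq : QuasiIso s := by rwa [← DerivedCategory.isIso_Q_map_iff_quasiIso]
  let i : (single C (ComplexShape.up ℤ) 0).obj (X'.cycles 0) ⟶ X' :=
    mkHomFromSingle (X'.iCycles 0) (by simp)
  have hi : i ≫ f = 0 := by
    apply from_single_hom_ext
    exact (isZero_single_obj_X _ _ _ _ hm.symm).eq_of_tgt _ _
  let p : X'.cycles 0 ⟶ A :=
    cyclesMap s 0 ≫ (singleObjCyclesSelfIso (ComplexShape.up ℤ) 0 A).hom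
  have hp : (single C (ComplexShape.up ℤ) 0).map p = i ≫ s := by
    apply from_single_hom_ext
    simp [i, p, single_map_f_self, singleObjCyclesSelfIso_hom]
  have hp' : p = X'.homologyπ 0 ≫ homologyMap s 0 ≫
      (singleObjHomologySelfIso (ComplexShape.up ℤ) 0 A).hom := by
    simp [p]
  refine ⟨X'.cycles 0, p, ?_, ?_⟩
  · rw [hp']
    infer_instance
  · rw [hp, Functor.map_comp, Category.assoc, IsIso.hom_inv_id_assoc, ← Functor.map_comp, hi,
      Functor.map_zero]

/-- Positive degree `Ext` classes are effaceable in the contravariant variable. -/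
lemma exists_epi_mk₀_comp_eq_zero {C : Type u} [Category.{v} C] [Abelian C] [HasExt.{w} C]
    {A Y : C} {n : ℕ} (hn : n ≠ 0) (x : Abelian.Ext A Y n) :
    ∃ (K : C) (p : K ⟶ A), Epi p ∧ (Abelian.Ext.mk₀ p).comp x (zero_add n) = 0 := by
  letI := HasDerivedCategory.standard C
  let e := ((DerivedCategory.singleFunctors C).shiftIso (n : ℤ) (-n : ℤ) 0 (by simp)).app Y
  obtain ⟨K, p, hp, h⟩ := exists_epi_Q_map_comp_eq_zero A Y (-n : ℤ) (by simpa using hn)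
    (x.hom ≫ e.hom)
  refine ⟨K, p, hp, ?_⟩
  ext
  have h' : (DerivedCategory.singleFunctor C 0).map p ≫ x.hom = 0 := by
    rw [← cancel_mono e.hom, Category.assoc, Limits.zero_comp]
    exact h
  simpa [Abelian.Ext.comp_hom, ShiftedHom.mk₀_comp] using h'

/-- If `𝒮` is a self-generating class of objects of an abelian category that
is closed under kernels of epimorphisms, and `Ext¹(S, X) = 0` for all `S ∈ 𝒮`,
then `Extⁿ(S, X) = 0` for all `S ∈ 𝒮` and all `n ≥ 1`. -/
theorem selfGenerating_ext_vanishing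
    (C : Type u) [Category.{v} C] [Abelian C] [HasExt.{w} C]
    (S : Set C)
    -- 𝒮 is self-generating
    (hself : ∀ (K : C) (s : C), s ∈ S → ∀ p : K ⟶ s, Epi p →
      ∃ (s' : C) (_ : s' ∈ S) (q : s' ⟶ s) (_ : Epi q) (l : s' ⟶ K),
        l ≫ p = q)
    -- 𝒮 is closed under kernels of epimorphisms
    (hker : ∀ (T : ShortComplex C), T.ShortExact →
      T.X₂ ∈ S → T.X₃ ∈ S → T.X₁ ∈ S)
    (X : C) (hX : ∀ s ∈ S, Subsingleton (Abelian.Ext s X 1)) :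
    ∀ s ∈ S, ∀ n : ℕ, 1 ≤ n → Subsingleton (Abelian.Ext s X n) := by
  intro s hs n hn
  induction n, hn using Nat.le_induction generalizing s with
  | base => exact hX s hs
  | succ n hn ih =>
    refine subsingleton_of_forall_eq 0 fun x => ?_
    obtain ⟨K, p, hp, hx⟩ := exists_epi_mk₀_comp_eq_zero (Nat.succ_ne_zero n) x
    obtain ⟨s', hs', q, hq, l, rfl⟩ := hself K s hs p hp
    have hT : (ShortComplex.mk (kernel.ι (l ≫ p)) (l ≫ p) (kernel.condition _)).ShortExact :=
      { exact := ShortComplex.exact_of_f_is_kernel _ (kernelIsKernel _)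
        mono_f := inferInstanceAs (Mono (kernel.ι (l ≫ p)))
        epi_g := hq }
    have hx' : (Abelian.Ext.mk₀ (l ≫ p)).comp x (zero_add _) = 0 := by
      rw [← Abelian.Ext.mk₀_comp_mk₀_assoc, hx, Abelian.Ext.comp_zero]
    obtain ⟨y, hy⟩ := Abelian.Ext.contravariant_sequence_exact₃ hT X x hx' (Nat.add_comm 1 n)
    have := ih _ (hker _ hT hs' hs)
    rw [← hy, Subsingleton.elim y 0, Abelian.Ext.comp_zero]

end Stmt8
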